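/- Identify ℝ^{n+1} = ℝ^n ⊕ ℝe_{n+1} and regard S^{n-1}, the unit sphere of ℝ^n, as the equator of the unit sphere S^n of ℝ^{n+1}. Then for every measurable function g : S^n → [0,∞], ∫_{S^n} g(w) d*w = (σ_{n−1}/σ_n) · ∫_{S^{n-1}} ∫_ℝ g( (θ + t e_{n+1}) / √(1+t²) ) · (1 + t²)^{−(n+1)/2} dt d*θ, where d*w and d*θ are the normalized (probability) surface measures on S^n and S^{n-1} respectively, and the equality holds in [0,∞]. (This is the case k = n−1 of the paper's transition formula between integration over the affine Grassmannian A_{n,k}, parametrized here by (θ,t) ↦ the hyperplane θ^⊥ + tθ lifted to the linear hyperplane of ℝ^{n+1} with unit normal (θ + t e_{n+1})/√(1+t²), and integration over the compact Grassmannian G_{n+1,k+1}.) -/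

import Mathlib

open MeasureTheory Metric Real
open scoped ENNReal NNReal

noncomputable section

/-- The normalized (probability) surface measure `d*θ` on the unit sphere of
`EuclideanSpace ℝ (Fin n)`. -/
def sphMeasure (n : ℕ) : Measure (sphere (0 : EuclideanSpace ℝ (Fin n)) 1) :=
  ((volume : Measure (EuclideanSpace ℝ (Fin n))).toSphere Set.univ)⁻¹ •
    (volume : Measure (EuclideanSpace ℝ (Fin n))).toSphere

/-- The hyperplane Radon transform: `Rf(θ,t) = ∫_{θ^⊥} f(tθ + y) dy`, where `θ^⊥` carries its
canonical Lebesgue measure as an (n-1)-dimensional inner product space. -/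
def Radon (n : ℕ) (f : EuclideanSpace ℝ (Fin n) → ℝ≥0∞)
    (θ : sphere (0 : EuclideanSpace ℝ (Fin n)) 1) (t : ℝ) : ℝ≥0∞ :=
  ∫⁻ y : ((ℝ ∙ (θ : EuclideanSpace ℝ (Fin n)))ᗮ),
    f (t • (θ : EuclideanSpace ℝ (Fin n)) + (y : EuclideanSpace ℝ (Fin n)))

/-- `σ_m = 2π^{(m+1)/2}/Γ((m+1)/2)`, the surface area of the unit sphere `S^m`. -/
def sphereArea (m : ℕ) : ℝ :=
  2 * Real.pi ^ (((m : ℝ) + 1) / 2) / Real.Gamma (((m : ℝ) + 1) / 2)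

/-- The canonical embedding `ℝ^n → ℝ^{n+1} = ℝ^n ⊕ ℝ e_{n+1}` (last coordinate zero). -/
def emb (n : ℕ) (x : EuclideanSpace ℝ (Fin n)) : EuclideanSpace ℝ (Fin (n + 1)) :=
  (WithLp.equiv 2 (Fin (n + 1) → ℝ)).symm (Fin.snoc ((WithLp.equiv 2 (Fin n → ℝ)) x) 0)

lemma polar (m : ℕ) (F : EuclideanSpace ℝ (Fin (m+1)) → ℝ≥0∞) (hF : Measurable F) :
    ∫⁻ x, F x = ∫⁻ θ, ∫⁻ r : Set.Ioi (0:ℝ), F ((r : ℝ) • (θ : EuclideanSpace ℝ (Fin (m+1))))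
      ∂(Measure.volumeIoiPow m)
      ∂((volume : Measure (EuclideanSpace ℝ (Fin (m+1)))).toSphere) := by
  have h := (volume : Measure (EuclideanSpace ℝ (Fin (m+1)))).measurePreserving_homeomorphUnitSphereProd
  simp only [finrank_euclideanSpace, Fintype.card_fin, Nat.add_sub_cancel] at h
  have h0 : ∫⁻ x, F x = ∫⁻ x in ({0}ᶜ : Set (EuclideanSpace ℝ (Fin (m+1)))), F x := by
    rw [restrict_compl_singleton]
  rw [h0, ← lintegral_subtype_comap (measurableSet_singleton _).compl]
  rw [← lintegral_prod (f := fun p : sphere (0 : EuclideanSpace ℝ (Fin (m+1))) 1 × Set.Ioi (0:ℝ) =>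
    F ((p.2 : ℝ) • (p.1 : EuclideanSpace ℝ (Fin (m+1)))))]
  · rw [← h.lintegral_comp]
    · refine lintegral_congr fun x => ?_
      congr 1
      have hx : ‖(x : EuclideanSpace ℝ (Fin (m+1)))‖ ≠ 0 := norm_ne_zero_iff.2 x.2
      simp [smul_smul, mul_inv_cancel₀ hx]
    · apply hF.comp
      fun_prop
  · apply Measurable.aemeasurable
    apply hF.comp
    fun_prop

lemma emb_mp (n : ℕ) : MeasurePreserving
    (fun p : ℝ × EuclideanSpace ℝ (Fin n) => emb n p.2 + p.1 • EuclideanSpace.single (Fin.last n) 1) := by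
  have h1 := (volume_preserving_piFinSuccAbove (fun _ : Fin (n + 1) => ℝ) (Fin.last n)).symm
  have h2 := (MeasurePreserving.id (volume : Measure ℝ)).prod (PiLp.volume_preserving_ofLp (Fin n))
  have h3 := (PiLp.volume_preserving_toLp (Fin (n+1))).comp (h1.comp h2)
  rw [← Measure.volume_eq_prod] at h3
  convert h3 using 1
  ext p i
  refine Fin.lastCases ?_ (fun j => ?_) i
  · simp [emb, MeasurableEquiv.piFinSuccAbove]
  · simp [emb, MeasurableEquiv.piFinSuccAbove]

lemma toSphere_univ (m : ℕ) :
    (volume : Measure (EuclideanSpace ℝ (Fin (m+1)))).toSphere Set.univ =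
      ENNReal.ofReal (sphereArea m) := by
  rw [Measure.toSphere_apply_univ, EuclideanSpace.volume_ball]
  simp only [finrank_euclideanSpace, Fintype.card_fin, ENNReal.ofReal_one, one_pow, one_mul]
  rw [← ENNReal.ofReal_natCast, ← ENNReal.ofReal_mul (by positivity)]
  congr 1
  unfold sphereArea
  have hG : Real.Gamma (((m:ℝ)+1)/2) ≠ 0 := (Real.Gamma_pos_of_pos (by positivity)).ne'
  push_cast
  rw [Real.Gamma_add_one (by positivity), Real.sqrt_eq_rpow, ← Real.rpow_natCast, ← Real.rpow_mul Real.pi_pos.le]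
  have : (1 / 2 * ((m+1 : ℕ):ℝ)) = ((m:ℝ)+1)/2 := by push_cast; ring
  rw [this]
  field_simp

lemma sphereArea_pos (m : ℕ) : 0 < sphereArea m := by
  unfold sphereArea
  have := Real.Gamma_pos_of_pos (s := ((m:ℝ)+1)/2) (by positivity)
  positivity

lemma emb_smul (n : ℕ) (r : ℝ) (x : EuclideanSpace ℝ (Fin n)) : emb n (r • x) = r • emb n x := by
  ext i
  refine Fin.lastCases ?_ (fun j => ?_) i <;> simp [emb]

lemma norm_emb_add (n : ℕ) (t : ℝ) (x : EuclideanSpace ℝ (Fin n)) :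
    ‖emb n x + t • EuclideanSpace.single (Fin.last n) (1:ℝ)‖ = √(‖x‖^2 + t^2) := by
  rw [EuclideanSpace.norm_eq, EuclideanSpace.norm_sq_eq, Fin.sum_univ_castSucc]
  simp [emb]

lemma lint_scale (r : ℝ) (hr : 0 < r) (f : ℝ → ℝ≥0∞) :
    ∫⁻ s, f s = ENNReal.ofReal r * ∫⁻ t, f (r * t) := by
  have h := Real.smul_map_volume_mul_left hr.ne'
  conv_lhs => rw [← h]
  rw [lintegral_smul_measure, abs_of_pos hr, smul_eq_mul]
  congr 1
  exact lintegral_map_equiv f (Homeomorph.mulLeft₀ r hr.ne').toMeasurableEquiv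

lemma volumeIoiPow_succ (n : ℕ) (f : Set.Ioi (0:ℝ) → ℝ≥0∞) (hf : Measurable f) :
    ∫⁻ r, ENNReal.ofReal (r : ℝ) * f r ∂(Measure.volumeIoiPow n)
      = ∫⁻ r, f r ∂(Measure.volumeIoiPow (n+1)) := by
  unfold Measure.volumeIoiPow
  rw [lintegral_withDensity_eq_lintegral_mul _ (by fun_prop) (by fun_prop),
    lintegral_withDensity_eq_lintegral_mul _ (by fun_prop) (by fun_prop)]
  refine lintegral_congr fun r => ?_
  have : 0 < (r:ℝ) := r.2
  simp only [Pi.mul_apply]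
  rw [← mul_assoc, ← ENNReal.ofReal_mul (by positivity), pow_succ]

/-- the radial cut-off function -/
def cutF (n : ℕ) (g : EuclideanSpace ℝ (Fin (n + 1)) → ℝ≥0∞) (x : EuclideanSpace ℝ (Fin (n + 1))) : ℝ≥0∞ :=
  g (‖x‖⁻¹ • x) * (Set.Iio (1:ℝ)).indicator 1 ‖x‖

lemma cutF_meas (n : ℕ) (g : EuclideanSpace ℝ (Fin (n + 1)) → ℝ≥0∞) (hg : Measurable g) :
    Measurable (cutF n g) := by
  unfold cutF
  apply Measurable.mul
  · exact hg.comp (by fun_prop)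
  · exact (measurable_one.indicator measurableSet_Iio).comp measurable_norm

lemma cutF_int (n : ℕ) (g : EuclideanSpace ℝ (Fin (n + 1)) → ℝ≥0∞)
    (v : EuclideanSpace ℝ (Fin (n + 1))) (hv : v ≠ 0) :
    ∫⁻ r : Set.Ioi (0:ℝ), cutF n g ((r:ℝ) • v) ∂(Measure.volumeIoiPow n) =
      g (‖v‖⁻¹ • v) * ENNReal.ofReal ((‖v‖⁻¹)^(n+1) / (n+1)) := by
  have hp : 0 < ‖v‖ := norm_pos_iff.2 hv
  rw [← Measure.volumeIoiPow_apply_Iio n ⟨‖v‖⁻¹, inv_pos.2 hp⟩,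
    ← lintegral_indicator_one measurableSet_Iio, ← lintegral_const_mul]
  · refine lintegral_congr fun r => ?_
    have hr : 0 < (r:ℝ) := r.2
    unfold cutF
    congr 1
    · congr 1
      rw [norm_smul, smul_smul, Real.norm_of_nonneg hr.le]
      congr 1
      field_simp
    · rw [norm_smul, Real.norm_of_nonneg hr.le]
      simp only [Set.indicator, Set.mem_Iio, Pi.one_apply]
      congr 1
      rw [← Subtype.coe_lt_coe, lt_inv_comm₀ hr hp, ← one_div, lt_div_iff₀ hr, mul_comm]
  · exact measurable_one.indicator measurableSet_Iio

lemma main_unnorm (m : ℕ)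
    (g : EuclideanSpace ℝ (Fin (m + 1 + 1)) → ℝ≥0∞) (hg : Measurable g) :
    ∫⁻ w, g (w : EuclideanSpace ℝ (Fin (m + 1 + 1)))
      ∂((volume : Measure (EuclideanSpace ℝ (Fin (m+1+1)))).toSphere) =
    ∫⁻ θ, ∫⁻ t : ℝ,
          g (((1 + t ^ 2) ^ (-(1 : ℝ) / 2)) •
              (emb (m+1) (θ : EuclideanSpace ℝ (Fin (m+1))) +
                t • EuclideanSpace.single (Fin.last (m+1)) 1)) *
            ENNReal.ofReal (1 + t ^ 2) ^ (-(((m+1 : ℕ) : ℝ) + 1) / 2) ∂volume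
      ∂((volume : Measure (EuclideanSpace ℝ (Fin (m+1)))).toSphere) := by
  have hF := cutF_meas (m+1) g hg
  have hmp := emb_mp (m+1)
  set c : ℝ≥0∞ := ENNReal.ofReal (1 / (((m+1:ℕ):ℝ)+1)) with hc
  have hc0 : c ≠ 0 := by rw [hc]; simp; positivity
  have hct : c ≠ ⊤ := ENNReal.ofReal_ne_top
  have hA : ∫⁻ x, cutF (m+1) g x = (∫⁻ w, g (w : EuclideanSpace ℝ (Fin (m + 1 + 1)))
      ∂((volume : Measure (EuclideanSpace ℝ (Fin (m+1+1)))).toSphere)) * c := by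
    rw [polar (m+1) _ hF, ← lintegral_mul_const' _ _ hct]
    refine lintegral_congr fun w => ?_
    have hw : ‖(w : EuclideanSpace ℝ (Fin (m + 1 + 1)))‖ = 1 := by simp
    rw [cutF_int _ _ _ (norm_ne_zero_iff.1 (by rw [hw]; simp)), hw]
    simp [hc]
  have hB : ∫⁻ x, cutF (m+1) g x = (∫⁻ θ, ∫⁻ t : ℝ,
          g (((1 + t ^ 2) ^ (-(1 : ℝ) / 2)) •
              (emb (m+1) (θ : EuclideanSpace ℝ (Fin (m+1))) +
                t • EuclideanSpace.single (Fin.last (m+1)) 1)) *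
            ENNReal.ofReal (1 + t ^ 2) ^ (-(((m+1 : ℕ) : ℝ) + 1) / 2) ∂volume
      ∂((volume : Measure (EuclideanSpace ℝ (Fin (m+1)))).toSphere)) * c := by
    have hm2 : Measurable (fun p : ℝ × EuclideanSpace ℝ (Fin (m+1)) =>
      cutF (m+1) g (emb (m+1) p.2 + p.1 • EuclideanSpace.single (Fin.last (m+1)) 1)) :=
      hF.comp hmp.measurable
    rw [← hmp.lintegral_comp hF, Measure.volume_eq_prod, lintegral_prod_symm _ hm2.aemeasurable,
      polar m _ hm2.lintegral_prod_left', ← lintegral_mul_const' _ _ hct]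
    refine lintegral_congr fun θ => ?_
    have hnt : ∀ t : ℝ, ‖emb (m+1) (θ : EuclideanSpace ℝ (Fin (m+1))) +
                t • EuclideanSpace.single (Fin.last (m+1)) (1:ℝ)‖ = √(1+t^2) := by
      intro t; rw [norm_emb_add]; simp
    have hm3 : Measurable (fun p : Set.Ioi (0:ℝ) × ℝ =>
        cutF (m+1) g ((p.1:ℝ) • (emb (m+1) (θ : EuclideanSpace ℝ (Fin (m+1))) +
          p.2 • EuclideanSpace.single (Fin.last (m+1)) 1))) := hF.comp (by fun_prop)
    calc _ = ∫⁻ r : Set.Ioi (0:ℝ), ENNReal.ofReal (r:ℝ) * (∫⁻ t : ℝ,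
        cutF (m+1) g ((r:ℝ) • (emb (m+1) (θ : EuclideanSpace ℝ (Fin (m+1))) +
          t • EuclideanSpace.single (Fin.last (m+1)) 1))) ∂(Measure.volumeIoiPow m) := by
          refine lintegral_congr fun r => ?_
          rw [lint_scale r r.2]
          congr 1
          refine lintegral_congr fun t => ?_
          rw [emb_smul, smul_add, smul_smul]
      _ = ∫⁻ r : Set.Ioi (0:ℝ), (∫⁻ t : ℝ,
        cutF (m+1) g ((r:ℝ) • (emb (m+1) (θ : EuclideanSpace ℝ (Fin (m+1))) +
          t • EuclideanSpace.single (Fin.last (m+1)) 1))) ∂(Measure.volumeIoiPow (m+1)) :=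
          volumeIoiPow_succ m _ hm3.lintegral_prod_right'
      _ = ∫⁻ t : ℝ, ∫⁻ r : Set.Ioi (0:ℝ),
        cutF (m+1) g ((r:ℝ) • (emb (m+1) (θ : EuclideanSpace ℝ (Fin (m+1))) +
          t • EuclideanSpace.single (Fin.last (m+1)) 1)) ∂(Measure.volumeIoiPow (m+1)) :=
          lintegral_lintegral_swap hm3.aemeasurable
      _ = _ := by
        rw [← lintegral_mul_const' _ _ hct]
        refine lintegral_congr fun t => ?_
        have ht : 0 < 1 + t^2 := by positivity
        rw [cutF_int _ _ _ (norm_ne_zero_iff.1 (by rw [hnt]; positivity)), hnt, mul_assoc]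
        congr 1
        · congr 2
          rw [Real.sqrt_eq_rpow, ← Real.rpow_neg ht.le]
          congr 1
          ring
        · rw [ENNReal.ofReal_rpow_of_pos ht, hc, ← ENNReal.ofReal_mul (by positivity),
            Real.sqrt_eq_rpow, ← Real.rpow_neg ht.le, ← Real.rpow_natCast, ← Real.rpow_mul ht.le,
            mul_one_div]
          congr 3
          push_cast
          ring
  rw [hA] at hB
  exact (ENNReal.mul_left_inj hc0 hct).1 hB

/-- Transition formula between integration over the affine Grassmannian `A_{n,n-1}`,
parametrized by `(θ,t) ↦ θ^⊥ + tθ`, lifted to the linear hyperplane of `ℝ^{n+1}` with unit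
normal `(θ + t e_{n+1})/√(1+t²)`, and integration over the sphere `S^n` (case `k = n-1`). -/
theorem stmt18 (n : ℕ) (hn : 2 ≤ n)
    (g : EuclideanSpace ℝ (Fin (n + 1)) → ℝ≥0∞) (hg : Measurable g) :
    (∫⁻ w, g (w : EuclideanSpace ℝ (Fin (n + 1))) ∂(sphMeasure (n + 1))) =
      ENNReal.ofReal (sphereArea (n - 1) / sphereArea n) *
        ∫⁻ θ, ∫⁻ t : ℝ,
          g (((1 + t ^ 2) ^ (-(1 : ℝ) / 2)) •
              (emb n (θ : EuclideanSpace ℝ (Fin n)) +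
                t • EuclideanSpace.single (Fin.last n) 1)) *
            ENNReal.ofReal (1 + t ^ 2) ^ (-((n : ℝ) + 1) / 2) ∂volume ∂(sphMeasure n) := by
  obtain ⟨m, rfl⟩ : ∃ m, n = m + 1 := ⟨n - 1, by omega⟩
  have h0 := sphereArea_pos m
  have h1 := sphereArea_pos (m+1)
  unfold sphMeasure
  rw [lintegral_smul_measure, lintegral_smul_measure, main_unnorm m g hg, toSphere_univ, toSphere_univ,
    smul_eq_mul, smul_eq_mul, ← mul_assoc, Nat.add_sub_cancel]
  congr 1
  rw [← ENNReal.ofReal_inv_of_pos h0, ← ENNReal.ofReal_inv_of_pos h1, ← ENNReal.ofReal_mul (by positivity)]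
  congr 1
  field_simp
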